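/- Let p be a prime, SNR > 0 and ε ∈ ℝ. Let X be a random variable uniformly distributed over the constellation Λ_p, let f be an integer with 1 ≤ f ≤ p−1, and let r be an integer with 2 ≤ r ≤ p−1. Define U = ( f·X + ε·X − ε·(r·X)* )*. Then 𝔼[exp(−(SNR/8)·U²)] ≤ (p−1)/p + (1/p)·exp( −(3·SNR/(2p²))·( ε mod [−1/4,1/4) )² ). -/

import Mathlib

open MeasureTheory ProbabilityTheory Real Filter
open scoped ENNReal

noncomputable section

/-- Reduction of `x` modulo the half-open interval `[a, b)`. -/
def modIco (a b x : ℝ) : ℝ := a + (b - a) * Int.fract ((x - a) / (b - a))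

/-- `L = √12`. -/
def Lc : ℝ := Real.sqrt 12

/-- `x*`: reduction of `x` modulo the basic interval `I = [-L/2, L/2)`. -/
def starI (x : ℝ) : ℝ := modIco (-(Lc / 2)) (Lc / 2) x

/-- `δ(p, γ) = min_{l ∈ {1,…,p−1}} |l·γ − ⌊l·γ⌉|`. -/
def deltaP (p : ℕ) (γ : ℝ) : ℝ :=
  sInf {d : ℝ | ∃ l : ℕ, 1 ≤ l ∧ l ≤ p - 1 ∧ d = |(l : ℝ) * γ - round ((l : ℝ) * γ)|}

/-- The set `P'(γ)` of admissible primes (depends on the SNR). -/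
def Pgood (SNR : ℝ) (γ : ℝ) : Set ℕ :=
  {p | p.Prime ∧
    Real.exp (-(3 * SNR / (2 * (p : ℝ) ^ 2)) * (modIco (-(1/4)) (1/4) γ) ^ 2) <
      1 - 2 * (p : ℝ) * Real.exp (-(3 * SNR / 8))}

/-- First rate expression in the achievable-rate theorem. -/
def rateA (SNR : ℝ) (p : ℕ) (γ : ℝ) : ℝ :=
  -(1/2) * Real.logb 2 (1/(p : ℝ)^2 + Real.sqrt (2 * π / (3 * SNR))
    + (1/(p : ℝ)) * Real.exp (-(3 * SNR / (2 * (p : ℝ)^2)) * (deltaP p γ)^2)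
    + 2 * Real.exp (-(3 * SNR / 8)))

/-- Second rate expression in the achievable-rate theorem. -/
def rateB (SNR : ℝ) (p : ℕ) (γ : ℝ) : ℝ :=
  -Real.logb 2 (1/(p : ℝ) + Real.sqrt (2 * π / (3 * (deltaP p γ)^2 * SNR))
    + 2 * Real.exp (-(3 * SNR / 8)))

/-- The `k`-th point of the constellation `Λ_p`. -/
def constPt (p : ℕ) (k : ℕ) : ℝ := starI (Lc / (p : ℝ) * (k : ℝ))

/-- The constellation `Λ_p` as a finite set of reals. -/
def constSet (p : ℕ) : Finset ℝ := (Finset.range p).image (constPt p)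

/-- The uniform probability measure on the constellation `Λ_p`. -/
def uniformConst (p : ℕ) : Measure ℝ :=
  (p : ℝ≥0∞)⁻¹ • ∑ k ∈ Finset.range p, Measure.dirac (constPt p k)

/-!
After division by `L / p` the constellation consists of the integers reduced modulo `p` into
`[-p/2, p/2)`, and at `X = (L / p) m` with `(r X)* = (L / p) s` one gets `U = (L / p) t`, where `t`
is congruent to `f m + (m - s) ε` modulo `p`. Bounding the exponential by `1` at all points but one,
it suffices to find one `m` for which `c = m - s` divides `2`: for every integer `N`, the number
`N + c ε` is then `c` times a translate of `ε` by a multiple of `1/2`, so that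
`|ε mod [-1/4, 1/4)| ≤ |N + c ε|`. As `r - 1` is invertible modulo `p`, one can solve
`m - s ≡ 1`; the difference is then `1` unless it wraps around to `1 - p`. A wrapped difference
still divides `2` for `p ≤ 3`, and for `p ≥ 4` it occurs only if `r ≡ -1`, in which case `m = 1`,
`s = -1` gives `c = 2`.
-/

/-- The value of `U = (f·X + ε·X - ε·(r·X)*)*` at `X = x`, with integer coefficients `f` and `r`. -/
def foldedCombination (ε : ℝ) (f r : ℤ) (x : ℝ) : ℝ :=
  starI (f * x + ε * x - ε * starI (r * x))

section ModIco

lemma modIco_eq_toIcoMod {a b : ℝ} (hab : a < b) (x : ℝ) :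
    modIco a b x = toIcoMod (sub_pos.2 hab) a x := by
  rw [toIcoMod_eq_add_fract_mul, modIco, mul_comm]

lemma modIco_eq_iff {a b : ℝ} (hab : a < b) {x y : ℝ} :
    modIco a b x = y ↔ y ∈ Set.Ico a b ∧ ∃ k : ℤ, x = y + k * (b - a) := by
  simp only [modIco_eq_toIcoMod hab, toIcoMod_eq_iff, add_sub_cancel, zsmul_eq_mul]

lemma modIco_mul_left (s a b x : ℝ) : modIco (s * a) (s * b) (s * x) = s * modIco a b x := by
  rcases eq_or_ne s 0 with rfl | hs
  · simp [modIco]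
  · simp only [modIco, ← mul_sub, mul_div_mul_left _ _ hs]
    ring

lemma modIco_intCast {n : ℕ} (hn : 0 < n) (a : ℤ) :
    modIco (-(n / 2)) (n / 2) a = a.bmod n := by
  have hn' : (0 : ℝ) < n := Nat.cast_pos.2 hn
  have hlow : -(n : ℤ) ≤ 2 * a.bmod n := by have := Int.le_bmod (x := a) hn; omega
  have hupp : 2 * a.bmod n < n := by have := Int.bmod_lt (x := a) hn; omega
  have hlow' : -(n : ℝ) ≤ 2 * a.bmod n := by exact_mod_cast hlow
  have hupp' : 2 * (a.bmod n : ℝ) < n := by exact_mod_cast hupp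
  refine (modIco_eq_iff (by linarith)).2 ⟨⟨by linarith, by linarith⟩, a.bdiv n, ?_⟩
  rw [sub_neg_eq_add, add_halves]
  exact_mod_cast (Int.bmod_add_bdiv' a n).symm

lemma abs_modIco_le_abs_add {a : ℝ} (ha : 0 < a) (x : ℝ) (j : ℤ) :
    |modIco (-a) a x| ≤ |x + j * (2 * a)| := by
  obtain ⟨⟨hlow, hupp⟩, k, hk⟩ := (modIco_eq_iff (neg_lt_self ha) (x := x)).1 rfl
  set y := modIco (-a) a x
  have hy : |y| ≤ a := abs_le.2 ⟨hlow, hupp.le⟩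
  have hx : x + j * (2 * a) = y + (k + j : ℤ) * (2 * a) := by rw [hk]; push_cast; ring
  rw [hx]
  rcases eq_or_ne (k + j) 0 with hkj | hkj
  · simp [hkj]
  · have hone : (1 : ℝ) ≤ |((k + j : ℤ) : ℝ)| := by exact_mod_cast Int.one_le_abs hkj
    calc |y| ≤ 1 * (2 * a) - |y| := by linarith
      _ ≤ |((k + j : ℤ) : ℝ)| * (2 * a) - |y| := by gcongr
      _ = |((k + j : ℤ) : ℝ) * (2 * a)| - |y| := by
        rw [abs_mul, abs_of_pos (a := 2 * a) (by linarith)]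
      _ ≤ |y + ((k + j : ℤ) : ℝ) * (2 * a)| := by
        simpa only [abs_neg, sub_neg_eq_add, add_comm] using
          abs_sub_abs_le_abs_sub (((k + j : ℤ) : ℝ) * (2 * a)) (-y)

lemma abs_modIco_quarter_le {c : ℤ} (hc : c ∣ 2) (N : ℤ) (ε : ℝ) :
    |modIco (-(1 / 4)) (1 / 4) ε| ≤ |N + c * ε| := by
  obtain ⟨d, hd⟩ := hc
  have hcd : (c : ℝ) * d = 2 := by exact_mod_cast hd.symm
  have hc_ne : c ≠ 0 := by rintro rfl; simp at hd
  have hc_one : (1 : ℝ) ≤ |(c : ℝ)| := by exact_mod_cast Int.one_le_abs hc_ne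
  calc |modIco (-(1 / 4)) (1 / 4) ε|
      ≤ |ε + (d * N : ℤ) * (2 * (1 / 4))| := abs_modIco_le_abs_add (by norm_num) ε _
    _ ≤ |(c : ℝ)| * |ε + (d * N : ℤ) * (2 * (1 / 4))| := le_mul_of_one_le_left (abs_nonneg _) hc_one
    _ = |N + c * ε| := by
      rw [← abs_mul]
      congr 1
      push_cast
      linear_combination (N / 2 : ℝ) * hcd

lemma abs_modIco_quarter_le_abs_modIco {n : ℕ} (hn : 0 < n) {c : ℤ} (hc : c ∣ 2) (N : ℤ) (ε : ℝ) :
    |modIco (-(1 / 4)) (1 / 4) ε| ≤ |modIco (-(n / 2)) (n / 2) (N + c * ε)| := by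
  have hn' : (0 : ℝ) < n := Nat.cast_pos.2 hn
  obtain ⟨-, k, hk⟩ :=
    (modIco_eq_iff (a := -(n / 2)) (b := n / 2) (by linarith) (x := N + c * ε)).1 rfl
  have hred : modIco (-(n / 2)) (n / 2) (N + c * ε) = (N - k * n : ℤ) + c * ε := by
    push_cast
    linear_combination -hk
  rw [hred]
  exact abs_modIco_quarter_le hc _ ε

lemma measurable_modIco (a b : ℝ) : Measurable (modIco a b) := by
  unfold modIco
  fun_prop

end ModIco

section BalancedResidues

variable {p : ℕ}

lemma bmod_sub_bmod_of_dvd_sub_one (hp : 0 < p) {a b : ℤ} (h : (p : ℤ) ∣ a - b - 1) :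
    a.bmod p - b.bmod p = 1 ∨ a.bmod p - b.bmod p = 1 - p := by
  have hdvd : (p : ℤ) ∣ a.bmod p - b.bmod p - 1 := by
    obtain ⟨v, hv⟩ := Int.dvd_bmod_sub_self (x := a) (m := p)
    obtain ⟨w, hw⟩ := Int.dvd_bmod_sub_self (x := b) (m := p)
    obtain ⟨t, ht⟩ := h
    exact ⟨v - w + t, by linear_combination hv - hw + ht⟩
  have ha_low := Int.le_bmod (x := a) hp
  have ha_upp := Int.bmod_lt (x := a) hp
  have hb_low := Int.le_bmod (x := b) hp
  have hb_upp := Int.bmod_lt (x := b) hp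
  rcases le_or_gt 1 (a.bmod p - b.bmod p) with hpos | hneg
  · left
    have := Int.eq_zero_of_dvd_of_nonneg_of_lt (by omega) (by omega) hdvd
    omega
  · right
    have := Int.eq_zero_of_dvd_of_nonneg_of_lt (by omega) (by omega)
      (hdvd.add (dvd_refl (p : ℤ)))
    omega

lemma dvd_add_one_of_bmod_sub_bmod_eq (hp : 3 ≤ p) {r u : ℤ}
    (hu : (p : ℤ) ∣ u - r * u - 1) (hwrap : u.bmod p - (r * u).bmod p = 1 - p) :
    (p : ℤ) ∣ r + 1 := by
  have hlow := Int.le_bmod (x := u) (m := p) (by omega)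
  have hupp := Int.bmod_lt (x := r * u) (m := p) (by omega)
  obtain ⟨v, hv⟩ := Int.dvd_bmod_sub_self (x := u) (m := p)
  obtain ⟨w, hw⟩ := hu
  have hdvd : (p : ℤ) ∣ (2 * u.bmod p + p) * (1 - r) - 2 :=
    ⟨(1 - r) * (2 * v + 1) + 2 * w, by linear_combination 2 * (1 - r) * hv + 2 * hw⟩
  have hm : 2 * u.bmod p + p = 0 ∨ 2 * u.bmod p + p = 1 := by omega
  rcases hm with hm | hm
  · rw [hm, zero_mul, zero_sub, dvd_neg] at hdvd
    have := Int.le_of_dvd (by norm_num) hdvd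
    omega
  · rw [hm, one_mul] at hdvd
    have hneg : r + 1 = -(1 - r - 2) := by ring
    rwa [hneg, dvd_neg]

lemma exists_bmod_sub_bmod_mul_dvd_two (hp : 2 ≤ p) {r : ℤ} (hr : IsCoprime (r - 1) p) :
    ∃ u : ℤ, u.bmod p - (r * u).bmod p ∣ 2 := by
  obtain ⟨a, b, hab⟩ := hr
  have hinv : (p : ℤ) ∣ -a - r * -a - 1 := ⟨-b, by linear_combination hab⟩
  rcases bmod_sub_bmod_of_dvd_sub_one (by omega) hinv with hone | hwrap
  · exact ⟨-a, hone ▸ one_dvd 2⟩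
  rcases lt_or_ge p 4 with hp4 | hp4
  · refine ⟨-a, ?_⟩
    rw [hwrap]
    interval_cases p <;> decide
  · obtain ⟨t, ht⟩ := dvd_add_one_of_bmod_sub_bmod_eq (by omega) hinv hwrap
    have hone : (1 : ℤ).bmod p = 1 := Int.bmod_eq_of_le (by omega) (by omega)
    have hr_bmod : (r * 1).bmod p = -1 :=
      (Int.bmod_eq_iff (by omega)).2 ⟨by omega, by omega, -t, by linear_combination -ht⟩
    exact ⟨1, by rw [hone, hr_bmod]; norm_num⟩

lemma isCoprime_sub_one_of_le_pred (hp : p.Prime) {r : ℕ} (hr : 2 ≤ r) (hrp : r ≤ p - 1) :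
    IsCoprime ((r : ℤ) - 1) p := by
  have hcop := Nat.isCoprime_iff_coprime.2
    (Nat.coprime_of_lt_prime (n := r - 1) (by omega) (by omega) hp).symm
  rwa [Nat.cast_sub (by omega), Nat.cast_one] at hcop

end BalancedResidues

section Constellation

variable {p : ℕ}

lemma sq_Lc : Lc ^ 2 = 12 := Real.sq_sqrt (by norm_num)

lemma starI_Lc_div_mul (hp : 0 < p) (y : ℝ) :
    starI (Lc / p * y) = Lc / p * modIco (-(p / 2)) (p / 2) y := by
  have hp' : (p : ℝ) ≠ 0 := Nat.cast_ne_zero.2 hp.ne'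
  have hL : Lc / 2 = Lc / p * (p / 2) := by field_simp
  rw [starI, hL, ← mul_neg, modIco_mul_left]

lemma starI_Lc_div_mul_intCast (hp : 0 < p) (a : ℤ) :
    starI (Lc / p * a) = Lc / p * a.bmod p := by
  rw [starI_Lc_div_mul hp, modIco_intCast hp]

lemma exists_constPt_eq (hp : 0 < p) (u : ℤ) : ∃ k < p, constPt p k = Lc / p * u.bmod p := by
  have hnonneg : 0 ≤ u % p := Int.emod_nonneg _ (by omega)
  have hlt : u % p < p := Int.emod_lt_of_pos _ (by omega)
  refine ⟨(u % p).toNat, by omega, ?_⟩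
  have hcast : (((u % p).toNat : ℕ) : ℝ) = ((u % p : ℤ) : ℝ) := by
    exact_mod_cast Int.toNat_of_nonneg hnonneg
  rw [constPt, hcast, starI_Lc_div_mul_intCast hp, Int.emod_bmod]

lemma foldedCombination_Lc_div_mul_bmod (hp : 0 < p) (ε : ℝ) (f r u : ℤ) :
    foldedCombination ε f r (Lc / p * u.bmod p) =
      Lc / p * modIco (-(p / 2)) (p / 2)
        ((f * u.bmod p : ℤ) + (u.bmod p - (r * u).bmod p : ℤ) * ε) := by
  have hr : starI (r * (Lc / p * u.bmod p)) = Lc / p * (r * u).bmod p := by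
    rw [mul_left_comm, ← Int.cast_mul, starI_Lc_div_mul_intCast hp, Int.mul_bmod_bmod]
  rw [foldedCombination, hr, ← starI_Lc_div_mul hp]
  congr 1
  push_cast
  ring

lemma exists_constPt_le_sq_foldedCombination (hp : 2 ≤ p) (ε : ℝ) (f : ℤ) {r : ℤ}
    (hr : IsCoprime (r - 1) p) :
    ∃ k < p, 12 / (p : ℝ) ^ 2 * modIco (-(1 / 4)) (1 / 4) ε ^ 2 ≤
      foldedCombination ε f r (constPt p k) ^ 2 := by
  have hp0 : 0 < p := by omega
  obtain ⟨u, hu⟩ := exists_bmod_sub_bmod_mul_dvd_two hp hr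
  obtain ⟨k, hk, hku⟩ := exists_constPt_eq hp0 u
  refine ⟨k, hk, ?_⟩
  rw [hku, foldedCombination_Lc_div_mul_bmod hp0, mul_pow, div_pow, sq_Lc]
  gcongr ?_ * ?_
  exact sq_le_sq.2 (abs_modIco_quarter_le_abs_modIco hp0 hu _ ε)

lemma measurable_foldedCombination (ε : ℝ) (f r : ℤ) : Measurable (foldedCombination ε f r) := by
  have hstar : Measurable starI := measurable_modIco _ _
  unfold foldedCombination
  fun_prop

end Constellation

section Expectation

lemma sum_le_card_sub_one_add {ι : Type*} {s : Finset ι} {g : ι → ℝ} (hg : ∀ i ∈ s, g i ≤ 1)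
    {k : ι} (hk : k ∈ s) : ∑ i ∈ s, g i ≤ (s.card - 1) + g k := by
  classical
  have herase : ∑ i ∈ s.erase k, g i ≤ (s.erase k).card • (1 : ℝ) :=
    Finset.sum_le_card_nsmul _ _ _ fun i hi => hg i (Finset.mem_of_mem_erase hi)
  rw [nsmul_one, Finset.cast_card_erase_of_mem hk] at herase
  rw [← Finset.sum_erase_add _ _ hk]
  gcongr

lemma integral_uniformConst (p : ℕ) (g : ℝ → ℝ) :
    ∫ x, g x ∂uniformConst p = 1 / p * ∑ k ∈ Finset.range p, g (constPt p k) := by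
  rw [uniformConst, integral_smul_measure,
    integral_finsetSum_measure fun _ _ => integrable_dirac (by simp)]
  simp [integral_dirac]

variable {Ω : Type*} [MeasurableSpace Ω] {μ : Measure Ω} {X : Ω → ℝ} {p : ℕ}

lemma integral_comp_le_of_hasLaw_uniformConst (hX : HasLaw X (uniformConst p) μ) {g : ℝ → ℝ}
    (hg : Measurable g) (hg_le : ∀ x, g x ≤ 1) {k : ℕ} (hk : k < p) :
    ∫ ω, g (X ω) ∂μ ≤ (p - 1) / p + 1 / p * g (constPt p k) := by
  have hsum := sum_le_card_sub_one_add (s := Finset.range p) (g := fun i => g (constPt p i))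
    (fun i _ => hg_le _) (Finset.mem_range.2 hk)
  rw [Finset.card_range] at hsum
  calc ∫ ω, g (X ω) ∂μ = 1 / p * ∑ i ∈ Finset.range p, g (constPt p i) := by
        rw [← integral_uniformConst, ← hX.integral_comp hg.aestronglyMeasurable]; rfl
    _ ≤ 1 / p * ((p - 1) + g (constPt p k)) := by gcongr
    _ = (p - 1) / p + 1 / p * g (constPt p k) := by ring

theorem lemma_expectation_case_d4_general (hp : 2 ≤ p) {SNR : ℝ} (hSNR : 0 ≤ SNR) (ε : ℝ) (f : ℤ)
    {r : ℤ} (hr : IsCoprime (r - 1) p) (hX : HasLaw X (uniformConst p) μ) :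
    ∫ ω, Real.exp (-(SNR / 8) * foldedCombination ε f r (X ω) ^ 2) ∂μ ≤
      ((p : ℝ) - 1) / p
        + 1 / p * Real.exp (-(3 * SNR / (2 * (p : ℝ) ^ 2)) * modIco (-(1 / 4)) (1 / 4) ε ^ 2) := by
  obtain ⟨k, hk, hsq⟩ := exists_constPt_le_sq_foldedCombination hp ε f hr
  have hmeas := measurable_foldedCombination ε f r
  have hexp_le_one (x : ℝ) : Real.exp (-(SNR / 8) * foldedCombination ε f r x ^ 2) ≤ 1 :=
    Real.exp_le_one_iff.2 (mul_nonpos_of_nonpos_of_nonneg (by linarith) (sq_nonneg _))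
  refine (integral_comp_le_of_hasLaw_uniformConst hX
    (g := fun x => Real.exp (-(SNR / 8) * foldedCombination ε f r x ^ 2))
    (by fun_prop) hexp_le_one hk).trans ?_
  gcongr _ + _ * Real.exp ?_
  calc -(SNR / 8) * foldedCombination ε f r (constPt p k) ^ 2
      ≤ -(SNR / 8) * (12 / (p : ℝ) ^ 2 * modIco (-(1 / 4)) (1 / 4) ε ^ 2) :=
        mul_le_mul_of_nonpos_left hsq (by linarith)
    _ = -(3 * SNR / (2 * (p : ℝ) ^ 2)) * modIco (-(1 / 4)) (1 / 4) ε ^ 2 := by ring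

end Expectation

/-- **Lemma 6.** For `X` uniform on `Λ_p`, `f ∈ {1,…,p−1}`, `r ∈ {2,…,p−1}` and
`U = (f·X + ε·X − ε·(r·X)*)*`, one has
`𝔼[exp(−(SNR/8)·U²)] ≤ (p−1)/p + (1/p)·exp(−(3·SNR/(2p²))·(ε mod [−1/4,1/4))²)`. -/
theorem lemma_expectation_case_d4
    (p : ℕ) (hp : p.Prime) (SNR : ℝ) (hSNR : 0 < SNR) (ε : ℝ)
    (f : ℕ) (hf1 : 1 ≤ f) (hf2 : f ≤ p - 1)
    (r : ℕ) (hr1 : 2 ≤ r) (hr2 : r ≤ p - 1)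
    (Ω : Type) (_ : MeasurableSpace Ω) (μ : Measure Ω) [IsProbabilityMeasure μ]
    (X : Ω → ℝ) (hX : Measurable X)
    (hXunif : Measure.map X μ = uniformConst p) :
    ∫ ω, Real.exp (-(SNR / 8) *
        (starI ((f : ℝ) * X ω + ε * X ω - ε * starI ((r : ℝ) * X ω))) ^ 2) ∂μ
      ≤ ((p : ℝ) - 1) / (p : ℝ)
        + (1 / (p : ℝ)) * Real.exp (-(3 * SNR / (2 * (p : ℝ) ^ 2))
            * (modIco (-(1/4)) (1/4) ε) ^ 2) := by
  simpa only [foldedCombination, Int.cast_natCast] using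
    lemma_expectation_case_d4_general hp.two_le hSNR.le ε f
      (isCoprime_sub_one_of_le_pred hp hr1 hr2) ⟨hX.aemeasurable, hXunif⟩
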